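/- Suppose each A_k has full row rank with λ_min(A_k A_k^T) ≥ γ_k² for constants γ_k > 0, and let γ_min := min_k γ_k. Then for every r ≥ 0 the cyclic exact BCD iterates satisfy Δ^{(r+1)} ≤ 3 · max{ Δ^{(0)}, 2 R_0² · (1/γ_min²) · log²(2NK) · (L² + L_max²) } / (r+1), where Δ^{(r)} := f(x^{(r)}) − f*. -/

import Mathlib

open Finset

/-- Squared Euclidean norm of a vector in `ℝ^n`. -/
noncomputable def sqnorm {n : ℕ} (v : Fin n → ℝ) : ℝ := ∑ i, v i ^ 2

/-- Euclidean inner product on `ℝ^n`. -/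
noncomputable def dotp {n : ℕ} (u v : Fin n → ℝ) : ℝ := ∑ i, u i * v i

/-- `λ_max(AᵀA)` for a real matrix `A`, characterized as the maximum of `‖Av‖²`
over unit vectors `v`. -/
noncomputable def lamMaxQ {M N : ℕ} (A : Matrix (Fin M) (Fin N) ℝ) : ℝ :=
  sSup {r : ℝ | ∃ v : Fin N → ℝ, sqnorm v = 1 ∧ r = sqnorm (A.mulVec v)}

/-- `λ_min(AᵀA)` for a real matrix `A`, characterized as the minimum of `‖Av‖²`
over unit vectors `v`. -/
noncomputable def lamMinQ {M N : ℕ} (A : Matrix (Fin M) (Fin N) ℝ) : ℝ :=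
  sInf {r : ℝ | ∃ v : Fin N → ℝ, sqnorm v = 1 ∧ r = sqnorm (A.mulVec v)}

/-- `λ_max(AᵀA)` for the concatenated matrix `A = [A_1 ⋯ A_K]`, acting on block
vectors. -/
noncomputable def lamMaxBlock {K M N : ℕ} (A : Fin K → Matrix (Fin M) (Fin N) ℝ) : ℝ :=
  sSup {r : ℝ | ∃ v : Fin K → Fin N → ℝ, (∑ k, sqnorm (v k)) = 1 ∧
    r = sqnorm (∑ k, (A k).mulVec (v k))}

/-- Maximum of a finite family of reals indexed by `Fin K`, `K ≥ 1`. -/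
noncomputable def maxOf {K : ℕ} (hK : 1 ≤ K) (P : Fin K → ℝ) : ℝ :=
  Finset.univ.sup' (Finset.univ_nonempty_iff.mpr ⟨⟨0, hK⟩⟩) P

/-- Minimum of a finite family of reals indexed by `Fin K`, `K ≥ 1`. -/
noncomputable def minOf {K : ℕ} (hK : 1 ≤ K) (P : Fin K → ℝ) : ℝ :=
  Finset.univ.inf' (Finset.univ_nonempty_iff.mpr ⟨⟨0, hK⟩⟩) P

/-- The residual `Σ_k A_k x_k − b`. -/
noncomputable def resid {K M N : ℕ} (A : Fin K → Matrix (Fin M) (Fin N) ℝ)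
    (b : Fin M → ℝ) (x : Fin K → Fin N → ℝ) : Fin M → ℝ :=
  (∑ k, (A k).mulVec (x k)) - b

/-- The smooth part `g(x) = (1/2)‖Σ_k A_k x_k − b‖²`. -/
noncomputable def gq {K M N : ℕ} (A : Fin K → Matrix (Fin M) (Fin N) ℝ)
    (b : Fin M → ℝ) (x : Fin K → Fin N → ℝ) : ℝ :=
  (1 / 2) * sqnorm (resid A b x)

/-- The objective `f(x) = g(x) + Σ_k h_k(x_k)`. -/
noncomputable def fq {K M N : ℕ} (A : Fin K → Matrix (Fin M) (Fin N) ℝ)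
    (b : Fin M → ℝ) (h : Fin K → (Fin N → ℝ) → ℝ) (x : Fin K → Fin N → ℝ) : ℝ :=
  gq A b x + ∑ k, h k (x k)

/-- The partial gradient `∇_k g(x) = A_kᵀ (Σ_j A_j x_j − b)`. -/
noncomputable def gradk {K M N : ℕ} (A : Fin K → Matrix (Fin M) (Fin N) ℝ)
    (b : Fin M → ℝ) (x : Fin K → Fin N → ℝ) (k : Fin K) : Fin N → ℝ :=
  ((A k).transpose).mulVec (resid A b x)

/-- The intermediate point `w_k^{(r+1)}` of the cycle: blocks `j < k` come from
`x^{(r+1)} = xp`, the remaining blocks from `x^{(r)} = x`. -/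
def wpt {K N : ℕ} (x xp : Fin K → Fin N → ℝ) (k : Fin K) : Fin K → Fin N → ℝ :=
  fun j => if j < k then xp j else x j

/-- The objective of the `k`-th BCPG prox subproblem at the point
`w_k^{(r+1)} = wpt x xp k`, evaluated at candidate block `y`. -/
noncomputable def bcpgObj {K M N : ℕ} (A : Fin K → Matrix (Fin M) (Fin N) ℝ)
    (b : Fin M → ℝ) (h : Fin K → (Fin N → ℝ) → ℝ) (P : Fin K → ℝ)
    (x xp : Fin K → Fin N → ℝ) (k : Fin K) (y : Fin N → ℝ) : ℝ :=
  dotp (gradk A b (wpt x xp k) k) (y - x k) + (P k / 2) * sqnorm (y - x k) + h k y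

/-- One cycle of cyclic BCPG: `xp = x^{(r+1)}` is obtained from `x = x^{(r)}`
by letting, for `k = 1,…,K`, the `k`-th block minimize the prox subproblem at
`w_k^{(r+1)}` over `X_k`. -/
def BCPGStep {K M N : ℕ} (A : Fin K → Matrix (Fin M) (Fin N) ℝ)
    (b : Fin M → ℝ) (h : Fin K → (Fin N → ℝ) → ℝ)
    (X : Fin K → Set (Fin N → ℝ)) (P : Fin K → ℝ)
    (x xp : Fin K → Fin N → ℝ) : Prop :=
  ∀ k : Fin K, xp k ∈ X k ∧ ∀ y ∈ X k,
    bcpgObj A b h P x xp k (xp k) ≤ bcpgObj A b h P x xp k y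

/-- One cycle of cyclic exact BCD: `xp = x^{(r+1)}` is obtained from
`x = x^{(r)}` by letting, for `k = 1,…,K`, the `k`-th block minimize
`f(x_1^{(r+1)},…,x_{k−1}^{(r+1)}, ·, x_{k+1}^{(r)},…,x_K^{(r)})` over `X_k`. -/
def BCDStep {K M N : ℕ} (A : Fin K → Matrix (Fin M) (Fin N) ℝ)
    (b : Fin M → ℝ) (h : Fin K → (Fin N → ℝ) → ℝ)
    (X : Fin K → Set (Fin N → ℝ))
    (x xp : Fin K → Fin N → ℝ) : Prop :=
  ∀ k : Fin K, xp k ∈ X k ∧ ∀ y ∈ X k,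
    fq A b h (Function.update (wpt x xp k) k (xp k)) ≤
      fq A b h (Function.update (wpt x xp k) k y)

/-!
In one cycle let `uⱼ = Aⱼ (xⱼ⁺ - xⱼ)` be the change of the residual caused by block `j`. Exact
minimization of a quadratic plus a convex function over block `j` decreases `f` by at least
`½‖uⱼ‖²`, so `½ ∑ⱼ ‖uⱼ‖² ≤ Δ - Δ⁺`. Conversely, the optimality condition of block `k` involves the
residual before the updates `j > k`, so convexity gives
`Δ⁺ ≤ ∑ⱼ ⟪uⱼ, ∑_{k < j} Aₖ (xₖ⁺ - xₖ*)⟫`. Each partial sum has squared norm at most `L R₀²`, and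
Cauchy–Schwarz yields `(Δ⁺)² ≤ 2 K L R₀² (Δ - Δ⁺)`, which forces `Δ = O(1 / r)`.

Testing `A Aᵀ = ∑ Aₖ Aₖᵀ` on a unit vector gives `K γ_min² ≤ L`, and `log (2 N K) ≥ 1`, so
`2 K L R₀²` is below the constant of the theorem.
-/

section ConvexOptimization

open scoped InnerProductSpace

lemma nonneg_of_forall_nonneg_mul_add_sq {a c : ℝ}
    (hac : ∀ t ∈ Set.Ioc (0 : ℝ) 1, 0 ≤ t * a + t ^ 2 * c) : 0 ≤ a := by
  have hlim : Filter.Tendsto (fun t : ℝ => a + t * c) (nhdsWithin 0 (Set.Ioi 0)) (nhds a) :=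
    (Continuous.tendsto' (by fun_prop) 0 a (by simp)).mono_left nhdsWithin_le_nhds
  refine ge_of_tendsto hlim ?_
  filter_upwards [Ioc_mem_nhdsGT one_pos] with t ht
  exact nonneg_of_mul_nonneg_right (by linarith [hac t ht]) ht.1

lemma le_add_inner_of_isMinOn_half_norm_sq_add {E F : Type*} [AddCommGroup E] [Module ℝ E]
    [SeminormedAddCommGroup F] [InnerProductSpace ℝ F] {T : E →ₗ[ℝ] F} {e : F} {φ : E → ℝ}
    {s : Set E} (hφ : ConvexOn ℝ s φ) {z : E} (hz : z ∈ s)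
    (hmin : IsMinOn (fun y => 1 / 2 * ‖e + T (y - z)‖ ^ 2 + φ y) s z) {y : E} (hy : y ∈ s) :
    φ z ≤ φ y + ⟪e, T (y - z)⟫_ℝ := by
  suffices 0 ≤ φ y + ⟪e, T (y - z)⟫_ℝ - φ z by linarith
  refine nonneg_of_forall_nonneg_mul_add_sq (c := 1 / 2 * ‖T (y - z)‖ ^ 2) fun t ht => ?_
  have hmem : (1 - t) • z + t • y ∈ s := hφ.1 hz hy (by linarith [ht.2]) ht.1.le (by ring)
  have hconv : φ ((1 - t) • z + t • y) ≤ (1 - t) * φ z + t * φ y :=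
    hφ.2 hz hy (by linarith [ht.2]) ht.1.le (by ring)
  have hdir : (1 - t) • z + t • y - z = t • (y - z) := by module
  have hle := isMinOn_iff.1 hmin _ hmem
  simp only [hdir, sub_self, map_zero, add_zero, map_smul, norm_add_sq_real, inner_smul_right,
    norm_smul, mul_pow, Real.norm_eq_abs, sq_abs] at hle
  linarith

lemma add_one_mul_le_two_mul_of_mul_sq_add_mul_le {m q t : ℝ} (hm : 0 ≤ m) (hq : 1 ≤ q)
    (h : q * (t ^ 2 + m * t) ≤ 2 * m ^ 2) : (q + 1) * t ≤ 2 * m := by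
  by_contra! hlt
  have hsq : 4 * m ^ 2 < ((q + 1) * t) ^ 2 := by nlinarith
  have hlin : 2 * m ^ 2 * (q + 1) ≤ m * (q + 1) * ((q + 1) * t) := by
    nlinarith [mul_le_mul_of_nonneg_left hlt.le (by positivity : 0 ≤ m * (q + 1))]
  have hscaled : q * (((q + 1) * t) ^ 2 + m * (q + 1) * ((q + 1) * t)) ≤
      2 * m ^ 2 * (q + 1) ^ 2 := by
    linarith [mul_le_mul_of_nonneg_left h (sq_nonneg (q + 1))]
  nlinarith [sq_nonneg m]

lemma le_two_mul_div_of_sq_le_mul_sub {d : ℕ → ℝ} {m : ℝ} (hm0 : 0 ≤ m) (hm : d 0 ≤ m)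
    (hrec : ∀ r, d (r + 1) ^ 2 ≤ m * (d r - d (r + 1))) (r : ℕ) : d r ≤ 2 * m / (r + 2) := by
  induction r with
  | zero => simpa using hm
  | succ r ih =>
    rw [le_div_iff₀' (by positivity)] at ih ⊢
    have hquad : ((r : ℝ) + 2) * (d (r + 1) ^ 2 + m * d (r + 1)) ≤ 2 * m ^ 2 := by
      nlinarith [hrec r, mul_le_mul_of_nonneg_left ih hm0]
    have hle := add_one_mul_le_two_mul_of_mul_sq_add_mul_le hm0
      (by linarith [r.cast_nonneg (α := ℝ)]) hquad
    push_cast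
    linarith

end ConvexOptimization

section Cycle

open scoped InnerProductSpace

variable {K : ℕ} {E : Fin K → Type*}

/-- The Gauss–Seidel iterate inside one cycle from `x` to `x'`, after the first `n` blocks have been
updated. Counting updates by `n : ℕ` rather than `Fin K` includes the end point `n = K`. -/
def cyclePoint (x x' : ∀ k, E k) (n : ℕ) (k : Fin K) : E k :=
  if k < n then x' k else x k

lemma cyclePoint_zero (x x' : ∀ k, E k) : cyclePoint x x' 0 = x := by
  ext k
  simp [cyclePoint]

lemma cyclePoint_card (x x' : ∀ k, E k) : cyclePoint x x' K = x' := by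
  ext k
  simp [cyclePoint]

lemma update_cyclePoint_self (x x' : ∀ k, E k) (k : Fin K) :
    Function.update (cyclePoint x x' k) k (x k) = cyclePoint x x' k := by
  simp [cyclePoint]

lemma update_cyclePoint (x x' : ∀ k, E k) (k : Fin K) :
    Function.update (cyclePoint x x' k) k (x' k) = cyclePoint x x' (k + 1) := by
  ext j
  rcases eq_or_ne j k with rfl | hjk
  · simp [cyclePoint]
  · have hiff : (j : ℕ) < k ↔ (j : ℕ) < k + 1 := by omega
    simp only [Function.update_of_ne hjk, cyclePoint, hiff]

variable [∀ k, AddCommGroup (E k)] [∀ k, Module ℝ (E k)]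
  {F : Type*} [SeminormedAddCommGroup F] [InnerProductSpace ℝ F]

/-- The residual `∑ Tₖ xₖ - b` of a block least-squares problem. The blocks are arbitrary real
vector spaces: block coordinate descent only sees the norm of the residual space `F`. -/
def blockResidual (T : ∀ k, E k →ₗ[ℝ] F) (b : F) (x : ∀ k, E k) : F :=
  ∑ k, T k (x k) - b

/-- The composite least-squares objective `½‖∑ Tₖ xₖ - b‖² + ∑ hₖ xₖ`; the coordinate-free form of
`fq`. -/
noncomputable def blockObjective (T : ∀ k, E k →ₗ[ℝ] F) (b : F) (h : ∀ k, E k → ℝ)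
    (x : ∀ k, E k) : ℝ :=
  1 / 2 * ‖blockResidual T b x‖ ^ 2 + ∑ k, h k (x k)

/-- One cycle of exact block coordinate descent for `blockObjective` over the product of the `X k`,
leading from `x` to `x'`; the coordinate-free form of `BCDStep`. -/
def IsBCDCycle (T : ∀ k, E k →ₗ[ℝ] F) (b : F) (h : ∀ k, E k → ℝ) (X : ∀ k, Set (E k))
    (x x' : ∀ k, E k) : Prop :=
  ∀ k, x' k ∈ X k ∧
    IsMinOn (fun y => blockObjective T b h (Function.update (cyclePoint x x' k) k y)) (X k) (x' k)

variable {T : ∀ k, E k →ₗ[ℝ] F} {b : F} {h : ∀ k, E k → ℝ} {X : ∀ k, Set (E k)}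
  {x x' : ∀ k, E k}

lemma blockResidual_sub (y z : ∀ k, E k) :
    blockResidual T b y - blockResidual T b z = ∑ k, T k (y k - z k) := by
  simp [blockResidual, sum_sub_distrib]

lemma blockResidual_update (w : ∀ k, E k) (k : Fin K) (y z : E k) :
    blockResidual T b (Function.update w k y) =
      blockResidual T b (Function.update w k z) + T k (y - z) := by
  rw [← sub_eq_iff_eq_add', blockResidual_sub, Fintype.sum_eq_single k]
  · simp
  · intro j hj
    simp [hj]

lemma blockObjective_update (w : ∀ k, E k) (k : Fin K) (y z : E k) :
    blockObjective T b h (Function.update w k y) =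
      1 / 2 * ‖blockResidual T b (Function.update w k z) + T k (y - z)‖ ^ 2 +
        (h k y + ∑ j ∈ univ \ {k}, h j (w j)) := by
  rw [blockObjective, blockResidual_update w k y z]
  simp only [Function.apply_update, sum_update_of_mem (mem_univ k)]

lemma blockResidual_cyclePoint_sub (k : Fin K) :
    blockResidual T b (cyclePoint x x' (k + 1)) - blockResidual T b x' =
      -∑ j ∈ Ioi k, T j (x' j - x j) := by
  rw [blockResidual_sub, ← sum_neg_distrib, ← filter_lt_eq_Ioi, sum_filter]
  refine sum_congr rfl fun j _ => ?_
  rcases lt_or_ge k j with hkj | hjk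
  · simp [cyclePoint, hkj, hkj.not_ge]
  · simp [cyclePoint, hjk]

namespace IsBCDCycle

variable (hcyc : IsBCDCycle T b h X x x') (hconv : ∀ k, ConvexOn ℝ (X k) (h k))

include hcyc hconv

lemma le_add_inner (k : Fin K) {y : E k} (hy : y ∈ X k) :
    h k (x' k) ≤ h k y + ⟪blockResidual T b (cyclePoint x x' (k + 1)), T k (y - x' k)⟫_ℝ := by
  have hmin := (hcyc k).2
  simp only [blockObjective_update _ k _ (x' k)] at hmin
  rw [update_cyclePoint] at hmin
  have hle := le_add_inner_of_isMinOn_half_norm_sq_add ((hconv k).add_const _) (hcyc k).1 hmin hy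
  simp only [Pi.add_apply] at hle
  linarith

lemma half_norm_sq_le_blockObjective_sub (hx : ∀ k, x k ∈ X k) (k : Fin K) :
    1 / 2 * ‖T k (x' k - x k)‖ ^ 2 ≤
      blockObjective T b h (cyclePoint x x' k) -
        blockObjective T b h (cyclePoint x x' (k + 1)) := by
  have hopt := hcyc.le_add_inner hconv k (hx k)
  have hupdate := blockObjective_update (T := T) (b := b) (h := h) (cyclePoint x x' k) k
  have hbefore := hupdate (x k) (x' k)
  have hafter := hupdate (x' k) (x' k)
  rw [update_cyclePoint_self, update_cyclePoint, norm_add_sq_real] at hbefore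
  rw [update_cyclePoint, sub_self, map_zero, add_zero] at hafter
  rw [← neg_sub (x k) (x' k), map_neg, norm_neg]
  linarith

lemma half_sum_norm_sq_le_blockObjective_sub (hx : ∀ k, x k ∈ X k) :
    1 / 2 * ∑ k, ‖T k (x' k - x k)‖ ^ 2 ≤ blockObjective T b h x - blockObjective T b h x' := by
  calc 1 / 2 * ∑ k, ‖T k (x' k - x k)‖ ^ 2
      ≤ ∑ k : Fin K, (blockObjective T b h (cyclePoint x x' k) -
          blockObjective T b h (cyclePoint x x' (k + 1))) := by
        rw [mul_sum]
        exact sum_le_sum fun k _ => hcyc.half_norm_sq_le_blockObjective_sub hconv hx k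
    _ = blockObjective T b h x - blockObjective T b h x' := by
        rw [Fin.sum_univ_eq_sum_range (fun n => blockObjective T b h (cyclePoint x x' n) -
          blockObjective T b h (cyclePoint x x' (n + 1))), sum_range_sub', cyclePoint_zero,
          cyclePoint_card]

lemma blockObjective_le (hx : ∀ k, x k ∈ X k) :
    blockObjective T b h x' ≤ blockObjective T b h x := by
  have hnonneg : 0 ≤ 1 / 2 * ∑ k, ‖T k (x' k - x k)‖ ^ 2 := by positivity
  linarith [hcyc.half_sum_norm_sq_le_blockObjective_sub hconv hx]

lemma blockObjective_sub_le_sum_inner {z : ∀ k, E k} (hz : ∀ k, z k ∈ X k) :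
    blockObjective T b h x' - blockObjective T b h z ≤
      ∑ k : Fin K, ⟪blockResidual T b (cyclePoint x x' (k + 1)) - blockResidual T b x',
        T k (z k - x' k)⟫_ℝ := by
  have hopt := sum_le_sum fun k (_ : k ∈ univ) => hcyc.le_add_inner hconv k (hz k)
  have hres : blockResidual T b z = blockResidual T b x' + ∑ k, T k (z k - x' k) := by
    rw [← blockResidual_sub, add_sub_cancel]
  have hexp := norm_add_sq_real (blockResidual T b x') (∑ k, T k (z k - x' k))
  rw [← hres, inner_sum] at hexp
  rw [sum_add_distrib] at hopt
  simp only [inner_sub_left, sum_sub_distrib, blockObjective]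
  linarith [sq_nonneg ‖∑ k, T k (z k - x' k)‖]

lemma blockObjective_sub_le {z : ∀ k, E k} (hz : ∀ k, z k ∈ X k) :
    blockObjective T b h x' - blockObjective T b h z ≤
      ∑ j, ⟪T j (x' j - x j), ∑ k ∈ Iio j, T k (x' k - z k)⟫_ℝ := by
  refine (hcyc.blockObjective_sub_le_sum_inner hconv hz).trans_eq ?_
  simp only [blockResidual_cyclePoint_sub, inner_sum, ← neg_sub (z _) (x' _), map_neg,
    inner_neg_right, inner_neg_left, sum_inner, ← sum_neg_distrib]
  exact sum_comm' (by simp)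

lemma sq_blockObjective_sub_le (hx : ∀ k, x k ∈ X k) {z : ∀ k, E k} (hz : ∀ k, z k ∈ X k)
    (hle : blockObjective T b h z ≤ blockObjective T b h x') {D : ℝ}
    (hD : ∀ j, ‖∑ k ∈ Iio j, T k (x' k - z k)‖ ^ 2 ≤ D) :
    (blockObjective T b h x' - blockObjective T b h z) ^ 2 ≤
      2 * (K * D) * (blockObjective T b h x - blockObjective T b h x') := by
  set u : Fin K → ℝ := fun j => ‖T j (x' j - x j)‖
  set s : Fin K → ℝ := fun j => ‖∑ k ∈ Iio j, T k (x' k - z k)‖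
  have hdecrease := hcyc.half_sum_norm_sq_le_blockObjective_sub hconv hx
  have hgap : blockObjective T b h x' - blockObjective T b h z ≤ ∑ j, u j * s j :=
    (hcyc.blockObjective_sub_le hconv hz).trans <|
      sum_le_sum fun j _ => real_inner_le_norm _ _
  have hs : ∑ j, s j ^ 2 ≤ K * D := by
    simpa using sum_le_card_nsmul univ (fun j => s j ^ 2) D fun j _ => hD j
  calc (blockObjective T b h x' - blockObjective T b h z) ^ 2
      ≤ (∑ j, u j * s j) ^ 2 := pow_le_pow_left₀ (sub_nonneg.2 hle) hgap 2
    _ ≤ (∑ j, u j ^ 2) * ∑ j, s j ^ 2 := sum_mul_sq_le_sq_mul_sq _ _ _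
    _ ≤ (2 * (blockObjective T b h x - blockObjective T b h x')) * (K * D) :=
        mul_le_mul (by linarith) hs (by positivity)
          (by linarith [hcyc.blockObjective_le hconv hx])
    _ = _ := by ring

end IsBCDCycle

theorem blockObjective_sub_le_of_isBCDCycle (hconv : ∀ k, ConvexOn ℝ (X k) (h k))
    {x : ℕ → ∀ k, E k} (hx0 : ∀ k, x 0 k ∈ X k)
    (hcyc : ∀ r, IsBCDCycle T b h X (x r) (x (r + 1)))
    {z : ∀ k, E k} (hzX : ∀ k, z k ∈ X k)
    (hmin : ∀ y, (∀ k, y k ∈ X k) → blockObjective T b h z ≤ blockObjective T b h y) {D : ℝ}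
    (hD : ∀ y, (∀ k, y k ∈ X k) → blockObjective T b h y ≤ blockObjective T b h (x 0) →
      ∀ j, ‖∑ k ∈ Iio j, T k (y k - z k)‖ ^ 2 ≤ D) (r : ℕ) :
    blockObjective T b h (x r) - blockObjective T b h z ≤
      2 * max (blockObjective T b h (x 0) - blockObjective T b h z) (2 * (K * D)) / (r + 2) := by
  have hfeas : ∀ r k, x r k ∈ X k
    | 0 => hx0
    | r + 1 => fun k => (hcyc r k).1
  have hmono : Antitone fun r => blockObjective T b h (x r) :=
    antitone_nat_of_succ_le fun r => (hcyc r).blockObjective_le hconv (hfeas r)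
  refine le_two_mul_div_of_sq_le_mul_sub
    (d := fun r => blockObjective T b h (x r) - blockObjective T b h z)
    ((sub_nonneg.2 (hmin _ hx0)).trans (le_max_left _ _)) (le_max_left _ _) (fun r => ?_) r
  rw [sub_sub_sub_cancel_right]
  calc (blockObjective T b h (x (r + 1)) - blockObjective T b h z) ^ 2
      ≤ 2 * (K * D) * (blockObjective T b h (x r) - blockObjective T b h (x (r + 1))) :=
        (hcyc r).sq_blockObjective_sub_le hconv (hfeas r) hzX (hmin _ (hfeas _))
          (hD _ (hfeas _) (hmono (Nat.zero_le _)))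
    _ ≤ _ := mul_le_mul_of_nonneg_right (le_max_right _ _) (sub_nonneg.2 (hmono r.le_succ))

end Cycle

section Spectral

lemma le_sSup_unit_mul {V : Type*} [SMul ℝ V] {Q S : V → ℝ} {C : ℝ}
    (hQ : ∀ (t : ℝ) v, Q (t • v) = t ^ 2 * Q v) (hS : ∀ (t : ℝ) v, S (t • v) = t ^ 2 * S v)
    (hS0 : ∀ v, 0 ≤ S v) (hQS : ∀ v, Q v ≤ C * S v) (v : V) :
    Q v ≤ sSup {r | ∃ w, S w = 1 ∧ r = Q w} * S v := by
  rcases (hS0 v).eq_or_lt with hv | hv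
  · simpa [← hv] using hQS v
  · have hbdd : BddAbove {r | ∃ w, S w = 1 ∧ r = Q w} := by
      refine ⟨C, ?_⟩
      rintro _ ⟨w, hw, rfl⟩
      simpa [hw] using hQS w
    have hnormalize : (√(S v))⁻¹ ^ 2 = (S v)⁻¹ := by rw [inv_pow, Real.sq_sqrt hv.le]
    have hle : (S v)⁻¹ * Q v ≤ sSup {r | ∃ w, S w = 1 ∧ r = Q w} := by
      refine le_csSup hbdd ⟨(√(S v))⁻¹ • v, ?_, ?_⟩
      · rw [hS, hnormalize, inv_mul_cancel₀ hv.ne']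
      · rw [hQ, hnormalize]
    rwa [inv_mul_le_iff₀' hv] at hle

lemma norm_sum_apply_sq_le {ι F : Type*} [Fintype ι] {E : ι → Type*}
    [∀ i, SeminormedAddCommGroup (E i)] [∀ i, NormedSpace ℝ (E i)] [SeminormedAddCommGroup F]
    [NormedSpace ℝ F] (T : ∀ i, E i →L[ℝ] F) (v : ∀ i, E i) :
    ‖∑ i, T i (v i)‖ ^ 2 ≤ (∑ i, ‖T i‖ ^ 2) * ∑ i, ‖v i‖ ^ 2 := by
  calc ‖∑ i, T i (v i)‖ ^ 2 ≤ (∑ i, ‖T i‖ * ‖v i‖) ^ 2 := by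
        gcongr
        exact norm_sum_le_of_le _ fun i _ => (T i).le_opNorm (v i)
    _ ≤ _ := sum_mul_sq_le_sq_mul_sq _ _ _

lemma sqnorm_eq_norm_sq {n : ℕ} (v : Fin n → ℝ) : sqnorm v = ‖WithLp.toLp 2 v‖ ^ 2 :=
  (EuclideanSpace.real_norm_sq_eq _).symm

lemma sqnorm_nonneg {n : ℕ} (v : Fin n → ℝ) : 0 ≤ sqnorm v :=
  sum_nonneg fun _ _ => sq_nonneg _

lemma sqnorm_smul {n : ℕ} (t : ℝ) (v : Fin n → ℝ) : sqnorm (t • v) = t ^ 2 * sqnorm v := by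
  simp [sqnorm_eq_norm_sq, norm_smul, mul_pow]

variable {K M N : ℕ} (A : Fin K → Matrix (Fin M) (Fin N) ℝ)

lemma lamMaxBlock_nonneg : 0 ≤ lamMaxBlock A :=
  Real.sSup_nonneg <| by
    rintro _ ⟨v, -, rfl⟩
    exact sqnorm_nonneg _

lemma sqnorm_sum_mulVec_le (v : Fin K → Fin N → ℝ) :
    sqnorm (∑ k, (A k).mulVec (v k)) ≤ lamMaxBlock A * ∑ k, sqnorm (v k) := by
  refine le_sSup_unit_mul (V := Fin K → Fin N → ℝ) (Q := fun v => sqnorm (∑ k, (A k).mulVec (v k)))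
    (S := fun v => ∑ k, sqnorm (v k))
    (C := ∑ k, ‖(A k).toEuclideanLin.toContinuousLinearMap‖ ^ 2) (fun t v => ?_) (fun t v => ?_)
    (fun v => sum_nonneg fun k _ => sqnorm_nonneg (v k)) (fun v => ?_) v
  · simp only [Pi.smul_apply, Matrix.mulVec_smul, ← smul_sum, sqnorm_smul]
  · simp only [Pi.smul_apply, sqnorm_smul, mul_sum]
  · simpa [sqnorm_eq_norm_sq, WithLp.toLp_sum, Matrix.toLpLin_apply] using
      norm_sum_apply_sq_le (fun k => (A k).toEuclideanLin.toContinuousLinearMap)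
        fun k => WithLp.toLp 2 (v k)

lemma lamMinQ_le_sqnorm_mulVec {B : Matrix (Fin M) (Fin N) ℝ} {v : Fin N → ℝ}
    (hv : sqnorm v = 1) : lamMinQ B ≤ sqnorm (B.mulVec v) := by
  refine csInf_le ⟨0, ?_⟩ ⟨v, hv, rfl⟩
  rintro _ ⟨w, -, rfl⟩
  exact sqnorm_nonneg _

lemma sum_sqnorm_transpose_mulVec_le (v : Fin M → ℝ) :
    ∑ k, sqnorm ((A k).transpose.mulVec v) ≤ lamMaxBlock A * sqnorm v := by
  set Q := ∑ k, sqnorm ((A k).transpose.mulVec v)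
  set w := ∑ k, (A k).mulVec ((A k).transpose.mulVec v) with hw
  have hdual : v ⬝ᵥ w = Q := by
    rw [hw, dotProduct_sum]
    refine sum_congr rfl fun k _ => ?_
    rw [Matrix.dotProduct_mulVec, ← Matrix.mulVec_transpose]
    simp only [dotProduct, sqnorm, sq]
  have hsq : Q ^ 2 ≤ lamMaxBlock A * sqnorm v * Q := by
    calc Q ^ 2 = (v ⬝ᵥ w) ^ 2 := by rw [hdual]
      _ ≤ sqnorm v * sqnorm w := sum_mul_sq_le_sq_mul_sq _ _ _
      _ ≤ sqnorm v * (lamMaxBlock A * Q) :=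
        mul_le_mul_of_nonneg_left (sqnorm_sum_mulVec_le A _) (sqnorm_nonneg v)
      _ = lamMaxBlock A * sqnorm v * Q := by ring
  have hQ_nonneg : 0 ≤ Q := sum_nonneg fun k _ => sqnorm_nonneg _
  rcases hQ_nonneg.eq_or_lt with hQ0 | hQ0
  · rw [← hQ0]
    exact mul_nonneg (lamMaxBlock_nonneg A) (sqnorm_nonneg v)
  · exact le_of_mul_le_mul_right (by linarith) hQ0

lemma sum_lamMinQ_transpose_le_lamMaxBlock (hM : 1 ≤ M) :
    ∑ k, lamMinQ (A k).transpose ≤ lamMaxBlock A := by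
  let v : Fin M → ℝ := Pi.single ⟨0, hM⟩ 1
  have hv : sqnorm v = 1 := by simp [v, sqnorm_eq_norm_sq]
  calc ∑ k, lamMinQ (A k).transpose ≤ ∑ k, sqnorm ((A k).transpose.mulVec v) :=
        sum_le_sum fun k _ => lamMinQ_le_sqnorm_mulVec hv
    _ ≤ lamMaxBlock A := by simpa [hv] using sum_sqnorm_transpose_mulVec_le A v

lemma minOf_pos (hK : 1 ≤ K) {P : Fin K → ℝ} (hP : ∀ k, 0 < P k) : 0 < minOf hK P :=
  (lt_inf'_iff _).2 fun k _ => hP k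

lemma minOf_le (hK : 1 ≤ K) (P : Fin K → ℝ) (k : Fin K) : minOf hK P ≤ P k :=
  inf'_le _ (mem_univ k)

lemma card_mul_minOf_sq_le_lamMaxBlock (hK : 1 ≤ K) (hM : 1 ≤ M) {γ : Fin K → ℝ}
    (hγ : ∀ k, 0 < γ k) (hrank : ∀ k, γ k ^ 2 ≤ lamMinQ (A k).transpose) :
    K * minOf hK γ ^ 2 ≤ lamMaxBlock A := by
  have hmin : ∀ k, minOf hK γ ^ 2 ≤ lamMinQ (A k).transpose := fun k =>
    (pow_le_pow_left₀ (minOf_pos hK hγ).le (minOf_le hK γ k) 2).trans (hrank k)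
  calc K * minOf hK γ ^ 2 = ∑ _k : Fin K, minOf hK γ ^ 2 := by simp
    _ ≤ ∑ k, lamMinQ (A k).transpose := sum_le_sum fun k _ => hmin k
    _ ≤ lamMaxBlock A := sum_lamMinQ_transpose_le_lamMaxBlock A hM

end Spectral

section Constants

lemma one_le_log_two_mul_mul {m n : ℕ} (hmn : 3 ≤ m * n) :
    1 ≤ Real.log (2 * (m : ℝ) * (n : ℝ)) := by
  have hmn' : (3 : ℝ) ≤ (m : ℝ) * n := by exact_mod_cast hmn
  rw [Real.le_log_iff_exp_le (by linarith)]
  linarith [Real.exp_one_lt_three]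

lemma two_mul_mul_sq_le_rowRankConstant {κ g L l : ℝ} (hg : 0 < g) (hL : 0 ≤ L)
    (hκ : κ * g ^ 2 ≤ L) (hl : 1 ≤ l) (B R : ℝ) :
    2 * (κ * (L * R ^ 2)) ≤ 2 * R ^ 2 * (1 / g ^ 2) * l ^ 2 * (L ^ 2 + B ^ 2) := by
  have hκ' : κ ≤ L / g ^ 2 := (le_div_iff₀ (by positivity)).2 hκ
  calc 2 * (κ * (L * R ^ 2)) ≤ 2 * (L / g ^ 2 * (L * R ^ 2)) := by gcongr
    _ = 2 * R ^ 2 * (1 / g ^ 2) * 1 * (L ^ 2 + 0) := by ring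
    _ ≤ 2 * R ^ 2 * (1 / g ^ 2) * l ^ 2 * (L ^ 2 + B ^ 2) := by
      gcongr
      · exact one_le_pow₀ hl
      · positivity

lemma two_mul_div_add_two_le_three_mul_div {m m' : ℝ} (hm' : 0 ≤ m') (hmm' : m ≤ m') (r : ℕ) :
    2 * m / ((r + 1 : ℕ) + 2) ≤ 3 * m' / (r + 1) := by
  refine div_le_div₀ (by positivity) (by linarith) (by positivity) ?_
  push_cast
  linarith

lemma two_mul_card_mul_lamMaxBlock_mul_sq_le {K M N : ℕ} (hK : 1 ≤ K) (hM : 1 ≤ M)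
    (hNK : 3 ≤ N * K) (A : Fin K → Matrix (Fin M) (Fin N) ℝ) {γ : Fin K → ℝ} (hγ : ∀ k, 0 < γ k)
    (hrank : ∀ k, γ k ^ 2 ≤ lamMinQ (A k).transpose) (R0 : ℝ) :
    2 * (K * (lamMaxBlock A * R0 ^ 2)) ≤
      2 * R0 ^ 2 * (1 / minOf hK γ ^ 2) * Real.log (2 * (N : ℝ) * (K : ℝ)) ^ 2 *
        (lamMaxBlock A ^ 2 + maxOf hK (fun k => lamMaxQ (A k)) ^ 2) :=
  two_mul_mul_sq_le_rowRankConstant (minOf_pos hK hγ) (lamMaxBlock_nonneg A)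
    (card_mul_minOf_sq_le_lamMaxBlock A hK hM hγ hrank) (one_le_log_two_mul_mul hNK) _ R0

end Constants

section Rate

variable {K M N : ℕ}

/-- The linear map `v ↦ A v` into `ℝ^M` with the Euclidean norm. The domain stays a plain function
space because no norm on the blocks is needed. -/
noncomputable def mulVecEuclidean (A : Matrix (Fin M) (Fin N) ℝ) :
    (Fin N → ℝ) →ₗ[ℝ] EuclideanSpace ℝ (Fin M) :=
  (WithLp.linearEquiv 2 ℝ (Fin M → ℝ)).symm.toLinearMap ∘ₗ A.mulVecLin

@[simp]
lemma mulVecEuclidean_apply (A : Matrix (Fin M) (Fin N) ℝ) (v : Fin N → ℝ) :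
    mulVecEuclidean A v = WithLp.toLp 2 (A.mulVec v) := rfl

variable (A : Fin K → Matrix (Fin M) (Fin N) ℝ) (b : Fin M → ℝ) (h : Fin K → (Fin N → ℝ) → ℝ)

lemma fq_eq_blockObjective :
    fq A b h = blockObjective (fun k => mulVecEuclidean (A k)) (WithLp.toLp 2 b) h := by
  ext x
  simp [fq, gq, resid, blockObjective, blockResidual, sqnorm_eq_norm_sq, WithLp.toLp_sum]

variable {A b h}

lemma BCDStep.isBCDCycle {X : Fin K → Set (Fin N → ℝ)} {x x' : Fin K → Fin N → ℝ}
    (hstep : BCDStep A b h X x x') :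
    IsBCDCycle (fun k => mulVecEuclidean (A k)) (WithLp.toLp 2 b) h X x x' := by
  intro k
  refine ⟨(hstep k).1, isMinOn_iff.2 fun y hy => ?_⟩
  rw [← fq_eq_blockObjective]
  exact (hstep k).2 y hy

lemma norm_sum_Iio_mulVecEuclidean_sq_le (v : Fin K → Fin N → ℝ) (j : Fin K) :
    ‖∑ k ∈ Iio j, mulVecEuclidean (A k) (v k)‖ ^ 2 ≤ lamMaxBlock A * ∑ k, sqnorm (v k) := by
  have hmask := sqnorm_sum_mulVec_le A fun k => if k < j then v k else 0
  calc ‖∑ k ∈ Iio j, mulVecEuclidean (A k) (v k)‖ ^ 2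
      = sqnorm (∑ k, (A k).mulVec (if k < j then v k else 0)) := by
        rw [← filter_gt_eq_Iio, sum_filter, sqnorm_eq_norm_sq, WithLp.toLp_sum]
        simp only [← mulVecEuclidean_apply, apply_ite, map_zero]
    _ ≤ lamMaxBlock A * ∑ k, sqnorm (v k) := by
        refine hmask.trans (mul_le_mul_of_nonneg_left (sum_le_sum fun k _ => ?_)
          (lamMaxBlock_nonneg A))
        split_ifs
        · exact le_rfl
        · simpa [sqnorm] using sqnorm_nonneg (v k)

theorem bcd_rate_row_rank_general {X : Fin K → Set (Fin N → ℝ)}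
    (hconv : ∀ k, ConvexOn ℝ (X k) (h k))
    {x : ℕ → Fin K → Fin N → ℝ} (hx0 : ∀ k, x 0 k ∈ X k)
    (hstep : ∀ r, BCDStep A b h X (x r) (x (r + 1)))
    {xstar : Fin K → Fin N → ℝ} (hxstarX : ∀ k, xstar k ∈ X k)
    (hxstar : ∀ y : Fin K → Fin N → ℝ, (∀ k, y k ∈ X k) → fq A b h xstar ≤ fq A b h y) {R0 : ℝ}
    (hR0 : ∀ z : Fin K → Fin N → ℝ, (∀ k, z k ∈ X k) → fq A b h z ≤ fq A b h (x 0) →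
      √(∑ k, sqnorm (z k - xstar k)) ≤ R0) (r : ℕ) :
    fq A b h (x r) - fq A b h xstar ≤
      2 * max (fq A b h (x 0) - fq A b h xstar) (2 * (K * (lamMaxBlock A * R0 ^ 2))) / (r + 2) := by
  simp only [fq_eq_blockObjective] at hxstar hR0 ⊢
  refine blockObjective_sub_le_of_isBCDCycle hconv hx0 (fun r => (hstep r).isBCDCycle) hxstarX
    hxstar (fun z hz hle j => ?_) r
  refine (norm_sum_Iio_mulVecEuclidean_sq_le _ j).trans ?_
  exact mul_le_mul_of_nonneg_left (Real.sqrt_le_iff.1 (hR0 z hz hle)).2 (lamMaxBlock_nonneg A)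

end Rate

/-- Theorem 2, case 2: iteration complexity of cyclic exact BCD
when each `A_k` has full row rank with `λ_min(A_k A_kᵀ) ≥ γ_k²`. -/
theorem bcd_rate_row_rank {K M N : ℕ} (hK : 1 ≤ K) (hM : 1 ≤ M) (hN : 1 ≤ N)
    (hNK : 3 ≤ N * K)
    (A : Fin K → Matrix (Fin M) (Fin N) ℝ) (b : Fin M → ℝ)
    (γ : Fin K → ℝ) (hγ : ∀ k, 0 < γ k)
    (hrank : ∀ k, γ k ^ 2 ≤ lamMinQ ((A k).transpose))
    (X : Fin K → Set (Fin N → ℝ)) (h : Fin K → (Fin N → ℝ) → ℝ)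
    (hXne : ∀ k, (X k).Nonempty) (hXcl : ∀ k, IsClosed (X k))
    (hXcv : ∀ k, Convex ℝ (X k))
    (hhcv : ∀ k, ConvexOn ℝ Set.univ (h k))
    (hhlsc : ∀ k, LowerSemicontinuous (h k))
    (x : ℕ → Fin K → Fin N → ℝ) (hx0 : ∀ k, x 0 k ∈ X k)
    (hstep : ∀ r : ℕ, BCDStep A b h X (x r) (x (r + 1)))
    (xstar : Fin K → Fin N → ℝ) (hxstarX : ∀ k, xstar k ∈ X k)
    (hxstar : ∀ y : Fin K → Fin N → ℝ, (∀ k, y k ∈ X k) → fq A b h xstar ≤ fq A b h y)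
    (R0 : ℝ)
    (hR0 : ∀ z : Fin K → Fin N → ℝ, (∀ k, z k ∈ X k) → fq A b h z ≤ fq A b h (x 0) →
      ∀ y : Fin K → Fin N → ℝ, (∀ k, y k ∈ X k) →
        (∀ z' : Fin K → Fin N → ℝ, (∀ k, z' k ∈ X k) → fq A b h y ≤ fq A b h z') →
        Real.sqrt (∑ k, sqnorm (z k - y k)) ≤ R0)
    (r : ℕ) :
    fq A b h (x (r + 1)) - fq A b h xstar ≤
      3 * max (fq A b h (x 0) - fq A b h xstar)
          (2 * R0 ^ 2 * (1 / minOf hK γ ^ 2) * Real.log (2 * (N : ℝ) * (K : ℝ)) ^ 2 *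
            (lamMaxBlock A ^ 2 + maxOf hK (fun k => lamMaxQ (A k)) ^ 2)) /
        (r + 1) := by
  have hconst := two_mul_card_mul_lamMaxBlock_mul_sq_le hK hM hNK A hγ hrank R0
  exact (bcd_rate_row_rank_general (fun k => (hhcv k).subset (Set.subset_univ _) (hXcv k)) hx0 hstep
    hxstarX hxstar (fun z hz hle => hR0 z hz hle xstar hxstarX hxstar) (r + 1)).trans <|
      two_mul_div_add_two_le_three_mul_div (le_max_of_le_left (sub_nonneg.2 (hxstar _ hx0)))
        (max_le_max_left _ hconst) r
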